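/- Let φ be a convex potential function, η ∈ (0, 1/2), and D a finite-covariance probability distribution on ℝ^d × {-1,1}. Then for every v ∈ ℝ^d, the noisy risk satisfies the lower bound P_{φ,D̄_η}(v) ≥ η · (φ(0) − φ'(0) · E_{(x,y)~D}[|v·x|]). (Note −φ'(0) > 0, so the bound grows with E[|v·x|].) -/

import Mathlib

/-!
For a label `y = ±1`, one of the two margins `y (v·x)` and `-y (v·x)` equals `-|v·x|`, and both
occur in the noisy risk with weight at least `η`. Since `φ ≥ 0`, the integrand is therefore at least
`η φ(-|v·x|)`, and convexity bounds this below by the tangent line at `0`, giving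
`η (φ(0) - φ'(0) |v·x|)`. Integrating this pointwise bound gives the theorem; finite covariance
makes `|v·x|` integrable.
-/

open MeasureTheory Filter
open scoped RealInnerProductSpace ENNReal

/-- A convex potential function in the sense of Long and Servedio:
`φ` is `C¹`, convex, nonincreasing, has `φ'(0) < 0`, and `φ(x) → 0` as `x → ∞`. -/
structure IsConvexPotential (φ : ℝ → ℝ) : Prop where
  differentiable : Differentiable ℝ φ
  continuous_deriv : Continuous (deriv φ)
  convexOn : ConvexOn ℝ Set.univ φ
  antitone : Antitone φ
  deriv_zero_neg : deriv φ 0 < 0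
  tendsto_zero : Filter.Tendsto φ Filter.atTop (nhds 0)

/-- The `φ`-risk of the linear classifier `v` under the `η`-RCN corrupted version of `D`:
`E_{(x,y)~D̄_η}[φ(y (v·x))] = E_{(x,y)~D}[(1-η) φ(y (v·x)) + η φ(-y (v·x))]`.
Since a convex potential function is nonnegative, we take the (extended-real-valued)
lower integral. -/
noncomputable def noisyRisk {d : ℕ} (φ : ℝ → ℝ) (η : ℝ)
    (D : Measure (EuclideanSpace ℝ (Fin d) × ℝ)) (v : EuclideanSpace ℝ (Fin d)) : ℝ≥0∞ :=
  ∫⁻ p, ENNReal.ofReal ((1 - η) * φ (p.2 * ⟪v, p.1⟫) + η * φ (-p.2 * ⟪v, p.1⟫)) ∂D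

theorem IsConvexPotential.nonneg {φ : ℝ → ℝ} (hφ : IsConvexPotential φ) (x : ℝ) : 0 ≤ φ x :=
  hφ.antitone.le_of_tendsto hφ.tendsto_zero x

theorem IsConvexPotential.tangent_le {φ : ℝ → ℝ} (hφ : IsConvexPotential φ) {t : ℝ}
    (ht : t ≤ 0) : φ 0 + deriv φ 0 * t ≤ φ t := by
  rcases ht.eq_or_lt with rfl | ht
  · simp
  · have h := hφ.convexOn.slope_le_of_hasDerivAt (Set.mem_univ t) (Set.mem_univ 0) ht
      (hφ.differentiable 0).hasDerivAt
    rw [slope_def_field, div_le_iff₀ (by linarith)] at h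
    linarith

/-- The pointwise form of the risk bound, with `z` the margin. -/
theorem IsConvexPotential.pointwise_bound {φ : ℝ → ℝ} (hφ : IsConvexPotential φ) {η : ℝ}
    (hη : η ∈ Set.Ioo (0 : ℝ) (1/2)) (z : ℝ) :
    η * (φ 0 - deriv φ 0 * |z|) ≤ (1 - η) * φ z + η * φ (-z) := by
  obtain ⟨h0, h1⟩ := hη
  have hz := hφ.nonneg z
  have hz' := hφ.nonneg (-z)
  have ht := hφ.tangent_le (neg_nonpos.2 (abs_nonneg z))
  have h : η * (φ 0 - deriv φ 0 * |z|) ≤ η * φ (-|z|) :=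
    mul_le_mul_of_nonneg_left (by linarith) h0.le
  refine h.trans ?_
  rcases abs_cases z with ⟨e, _⟩ | ⟨e, _⟩ <;> rw [e]
  · nlinarith
  · rw [neg_neg]
    nlinarith

/-- Lower bound on the noisy risk:
`P_{φ,D̄_η}(v) ≥ η (φ(0) − φ'(0) E_{(x,y)~D}[|v·x|])`. -/
theorem noisyRisk_lower_bound {d : ℕ} (φ : ℝ → ℝ) (hφ : IsConvexPotential φ)
    (η : ℝ) (hη : η ∈ Set.Ioo (0 : ℝ) (1/2))
    (D : Measure (EuclideanSpace ℝ (Fin d) × ℝ)) [IsProbabilityMeasure D]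
    (hlab : ∀ᵐ p ∂D, p.2 = 1 ∨ p.2 = -1)
    (hcov : ∀ u : EuclideanSpace ℝ (Fin d), Integrable (fun p => ⟪u, p.1⟫ ^ 2) D) :
    ∀ v : EuclideanSpace ℝ (Fin d),
      ENNReal.ofReal (η * (φ 0 - deriv φ 0 * ∫ p, |⟪v, p.1⟫| ∂D)) ≤ noisyRisk φ η D v := by
  intro v
  have hint : Integrable (fun p : EuclideanSpace ℝ (Fin d) × ℝ => |⟪v, p.1⟫|) D := by
    refine ((integrable_const (1 : ℝ)).add (hcov v)).mono' ?_ ?_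
    · exact (by fun_prop : Continuous
        (fun p : EuclideanSpace ℝ (Fin d) × ℝ => |⟪v, p.1⟫|)).aestronglyMeasurable
    · refine ae_of_all _ fun p => ?_
      simp only [Real.norm_eq_abs, abs_abs, Pi.add_apply]
      nlinarith [sq_abs ⟪v, p.1⟫, sq_nonneg (|⟪v, p.1⟫| - 1)]
  have hint' : Integrable (fun p : EuclideanSpace ℝ (Fin d) × ℝ =>
      η * (φ 0 - deriv φ 0 * |⟪v, p.1⟫|)) D :=
    ((integrable_const _).sub (hint.const_mul _)).const_mul _
  have hnn (p : EuclideanSpace ℝ (Fin d) × ℝ) : 0 ≤ η * (φ 0 - deriv φ 0 * |⟪v, p.1⟫|) := by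
    have := mul_nonneg (neg_nonneg.2 hφ.deriv_zero_neg.le) (abs_nonneg ⟪v, p.1⟫)
    exact mul_nonneg hη.1.le (by linarith [hφ.nonneg 0])
  have heq : η * (φ 0 - deriv φ 0 * ∫ p, |⟪v, p.1⟫| ∂D)
      = ∫ p, η * (φ 0 - deriv φ 0 * |⟪v, p.1⟫|) ∂D := by
    rw [integral_const_mul, integral_sub (integrable_const _) (hint.const_mul _),
      integral_const_mul, integral_const, probReal_univ, one_smul]
  rw [heq, ofReal_integral_eq_lintegral_ofReal hint' (ae_of_all _ hnn), noisyRisk]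
  refine lintegral_mono_ae ?_
  filter_upwards [hlab] with p hp
  refine ENNReal.ofReal_le_ofReal ?_
  have habs : |p.2 * ⟪v, p.1⟫| = |⟪v, p.1⟫| := by
    rcases hp with h | h <;> simp [h]
  have h := hφ.pointwise_bound hη (p.2 * ⟪v, p.1⟫)
  rwa [habs, ← neg_mul] at h
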